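/- Let d ≥ 1, ε > 0, let y₁, …, y_{d+2} be affinely independent points in ℝ^{d+1} with y_i = (x_i, t_i) (t_i ∈ ℝ the last coordinate), barycentric coordinates λ₁, …, λ_{d+2}, and let T denote the simplex with these vertices and |T| its (d+1)-dimensional Lebesgue volume. Let D be an invertible real (d+1)×(d+1) matrix, J ∈ ℝ^{d+1} a constant vector, and u₁, …, u_{d+2} real numbers. Suppose that for every pair i ≠ j, D⁻¹J · (y_i − y_j) = B((t_i − t_j)/ε) u_i − B((t_j − t_i)/ε) u_j. Then for every index j: |T| (J · ∇λ_j) = Σ_{i ≠ j} d_{ji} [ B((t_i − t_j)/ε) u_i − B((t_j − t_i)/ε) u_j ], where d_{ji} = |T| (D∇λ_i · ∇λ_j) = ∫_T D∇λ_i · ∇λ_j. -/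

import Mathlib

open MeasureTheory RealInnerProductSpace

/-- The Bernoulli function `B(s) = s / (e^s - 1)` for `s ≠ 0`, with `B(0) = 1`. -/
noncomputable def bernoulliFn (s : ℝ) : ℝ :=
  if s = 0 then 1 else s / (Real.exp s - 1)

/-- The action of a matrix on vectors of Euclidean space (as a linear map). -/
noncomputable def matVec {n : ℕ} (D : Matrix (Fin n) (Fin n) ℝ)
    (v : EuclideanSpace ℝ (Fin n)) : EuclideanSpace ℝ (Fin n) :=
  (WithLp.equiv 2 (Fin n → ℝ)).symm (D.mulVec (WithLp.equiv 2 (Fin n → ℝ) v))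

/-!
The gradients `∇λᵢ` with `i ≠ j` form the basis dual to the edges `yᵢ - yⱼ` issuing from the
vertex `yⱼ`, so `w = ∑_{i ≠ j} (w · (yᵢ - yⱼ)) ∇λᵢ` for every vector `w`. Take `w = D⁻¹J`, whose
components along the edges are the prescribed fluxes, apply `D`, and test against `|T| ∇λⱼ`.
-/

section Barycentric

variable {ι V W : Type*} [NormedAddCommGroup V] [InnerProductSpace ℝ V]
  {y : ι → V} {lam : ι → V → ℝ} {g : ι → V} {c : ι → ℝ}

theorem eq_of_forall_inner_edge_eq (hy : affineSpan ℝ (Set.range y) = ⊤) (j : ι) {v w : V}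
    (h : ∀ k, ⟪v, y k - y j⟫ = ⟪w, y k - y j⟫) : v = w := by
  have hspan : Submodule.span ℝ (Set.range fun k => y k - y j) = ⊤ := by
    simpa only [vsub_eq_sub, vectorSpan_range_eq_span_range_vsub_right ℝ y j] using
      AffineSubspace.vectorSpan_eq_top_of_affineSpan_eq_top ℝ V V hy
  have hinner : innerₗ V v = innerₗ V w := LinearMap.ext_on_range hspan h
  exact ext_inner_right ℝ (LinearMap.congr_fun hinner)

variable [DecidableEq ι]

theorem inner_gradient_edge (hlam : ∀ i z, lam i z = c i + ⟪g i, z⟫)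
    (hdelta : ∀ i j, lam i (y j) = if i = j then 1 else 0) (i j k : ι) :
    ⟪g i, y k - y j⟫ = (if i = k then 1 else 0) - if i = j then 1 else 0 := by
  rw [← hdelta i k, ← hdelta i j, hlam, hlam, inner_sub_right]
  ring

variable [Fintype ι]

theorem sum_inner_edge_smul_gradient (hy : affineSpan ℝ (Set.range y) = ⊤)
    (hlam : ∀ i z, lam i z = c i + ⟪g i, z⟫)
    (hdelta : ∀ i j, lam i (y j) = if i = j then 1 else 0) (j : ι) (w : V) :
    ∑ i ∈ Finset.univ.erase j, ⟪w, y i - y j⟫ • g i = w := by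
  rw [Finset.sum_erase Finset.univ (by simp)]
  refine eq_of_forall_inner_edge_eq hy j fun k => ?_
  simp [sum_inner, real_inner_smul_left, inner_gradient_edge hlam hdelta, mul_sub]

theorem sum_inner_edge_smul_map_gradient [AddCommGroup W] [Module ℝ W]
    (hy : affineSpan ℝ (Set.range y) = ⊤) (hlam : ∀ i z, lam i z = c i + ⟪g i, z⟫)
    (hdelta : ∀ i j, lam i (y j) = if i = j then 1 else 0) (A : V →ₗ[ℝ] W) (j : ι) (w : V) :
    ∑ i ∈ Finset.univ.erase j, ⟪w, y i - y j⟫ • A (g i) = A w := by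
  simpa only [map_sum, map_smul] using
    congrArg A (sum_inner_edge_smul_gradient hy hlam hdelta j w)

theorem eafe_local_stiffness_identity_general (hy : affineSpan ℝ (Set.range y) = ⊤)
    (hlam : ∀ i z, lam i z = c i + ⟪g i, z⟫)
    (hdelta : ∀ i j, lam i (y j) = if i = j then 1 else 0)
    (A : V →ₗ[ℝ] V) {J w : V} (hJ : A w = J) (a : ℝ) {flux : ι → ℝ} (j : ι)
    (hflux : ∀ i, i ≠ j → ⟪w, y i - y j⟫ = flux i) :
    a * ⟪J, g j⟫ = ∑ i ∈ Finset.univ.erase j, (a * ⟪A (g i), g j⟫) * flux i := by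
  calc
    a * ⟪J, g j⟫
        = a * ⟪∑ i ∈ Finset.univ.erase j, ⟪w, y i - y j⟫ • A (g i), g j⟫ := by
      rw [sum_inner_edge_smul_map_gradient hy hlam hdelta, hJ]
    _ = ∑ i ∈ Finset.univ.erase j, (a * ⟪A (g i), g j⟫) * ⟪w, y i - y j⟫ := by
      simp only [sum_inner, real_inner_smul_left, Finset.mul_sum, mul_assoc, mul_comm ⟪w, _⟫]
    _ = ∑ i ∈ Finset.univ.erase j, (a * ⟪A (g i), g j⟫) * flux i :=
      Finset.sum_congr rfl fun i hi => by rw [hflux i (Finset.ne_of_mem_erase hi)]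

end Barycentric

theorem matVec_matVec_inv {n : ℕ} {D : Matrix (Fin n) (Fin n) ℝ} (hD : IsUnit D)
    (v : EuclideanSpace ℝ (Fin n)) : matVec D (matVec D⁻¹ v) = v := by
  have hdet : IsUnit D.det := D.isUnit_iff_isUnit_det.mp hD
  simp [matVec, Matrix.mulVec_mulVec, Matrix.mul_nonsing_inv D hdet]

/-- Local stiffness identity for the lowest-order space-time Scharfetter--Gummel (EAFE)
scheme: if the edge tangential components of `D⁻¹J` are the exponentially fitted fluxes
`B((t_i - t_j)/ε) u_i - B((t_j - t_i)/ε) u_j`, then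
`|T| (J·∇λ_j) = Σ_{i ≠ j} d_{ji} [B((t_i - t_j)/ε) u_i - B((t_j - t_i)/ε) u_j]`,
where `d_{ji} = |T| (D∇λ_i · ∇λ_j) = ∫_T D∇λ_i · ∇λ_j`. -/
theorem eafe_local_stiffness_identity (d : ℕ) (hd : 1 ≤ d) (ε : ℝ) (hε : 0 < ε)
    (y : Fin (d + 2) → EuclideanSpace ℝ (Fin (d + 1))) (hy : AffineIndependent ℝ y)
    (t : Fin (d + 2) → ℝ) (ht : ∀ i, t i = y i (Fin.last d))
    (lam : Fin (d + 2) → EuclideanSpace ℝ (Fin (d + 1)) → ℝ)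
    (g : Fin (d + 2) → EuclideanSpace ℝ (Fin (d + 1))) (c : Fin (d + 2) → ℝ)
    (hlam : ∀ i z, lam i z = c i + ⟪g i, z⟫)
    (hdelta : ∀ i j, lam i (y j) = if i = j then 1 else 0)
    (hsum : ∀ z, (∑ i, lam i z) = 1)
    (D : Matrix (Fin (d + 1)) (Fin (d + 1)) ℝ) (hD : IsUnit D)
    (J : EuclideanSpace ℝ (Fin (d + 1))) (u : Fin (d + 2) → ℝ)
    (vol : ℝ) (hvol : vol = (volume (convexHull ℝ (Set.range y))).toReal)
    (hedge : ∀ i j : Fin (d + 2), i ≠ j →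
      ⟪matVec D⁻¹ J, y i - y j⟫
        = bernoulliFn ((t i - t j) / ε) * u i - bernoulliFn ((t j - t i) / ε) * u j) :
    ∀ j : Fin (d + 2), vol * ⟪J, g j⟫
      = ∑ i ∈ Finset.univ.erase j,
          (vol * ⟪matVec D (g i), g j⟫) *
            (bernoulliFn ((t i - t j) / ε) * u i - bernoulliFn ((t j - t i) / ε) * u j) := by
  have hspan : affineSpan ℝ (Set.range y) = ⊤ :=
    hy.affineSpan_eq_top_iff_card_eq_finrank_add_one.mpr (by simp)
  exact fun j => eafe_local_stiffness_identity_general hspan hlam hdelta (Matrix.toEuclideanLin D)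
    (matVec_matVec_inv hD J) vol j fun i => hedge i j
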